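/- Let W be a finite reflection group with root system Φ, a a generic point, Φ⁺ = {α ∈ Φ : ⟨a,α⟩ > 0}, and Δ a simple system for Φ⁺. For I ⊆ Δ let W_I be the subgroup of W generated by {s_α : α ∈ I} and F_I = conv{u(a) : u ∈ W_I}. Then for every w ∈ W and every I ⊆ Δ, the set w(F_I) is an exposed face of the permutahedron conv{w(a) : w ∈ W}: there is a continuous linear functional l on V such that w(F_I) = {x ∈ conv(W·a) : l(y) ≤ l(x) for all y ∈ conv(W·a)}. -/

import Mathlib

/-!
Fix a vector `l` with `⟪l, δ⟫ = 0` for `δ ∈ I` and `⟪l, δ⟫ = 1` for `δ ∈ Δ \ I`, which exists because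
`Δ` is linearly independent. The functional `⟪w l, ·⟫` exposes `w(F_I)`. As an exposed face of a
convex hull is the hull of the generators it contains (`convexHull_level_eq`), it is enough that the
maximizers of `⟪l, ·⟫` on the orbit `W a` are exactly the points of `W_I a`.

The functional `⟪l, ·⟫` is constant on `W_I`-orbits. Given a maximizer `x ∈ W a`, choose `u ∈ W_I`
with `⟪u x, a⟫` maximal. Comparing `u x` with `s_δ (u x)` shows `⟪u x, δ⟫ ≥ 0` for `δ ∈ I` (by the
choice of `u`) and for `δ ∈ Δ \ I` (since `u x` still maximizes `⟪l, ·⟫`). So `u x` is a dominant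
point of the orbit of the dominant regular point `a`, hence `u x = a` (`eq_one_of_dominant`)
and `x ∈ W_I a` (`mem_genSubgroup_of_maximizer`).

That an orbit has only one dominant point rests on three standard facts: a simple reflection `s_α`
permutes the positive roots other than `α` (`rootRefl_simple_mem_pos`), `W` is generated by the simple
reflections (`le_genSubgroup`), and the exchange condition (`IsWord.exchange`).
-/

open scoped RealInnerProductSpace

variable {V : Type*} [NormedAddCommGroup V] [InnerProductSpace ℝ V]

/-- `s` acts as the orthogonal reflection along the nonzero vector `α`:
`s v = v - 2 (⟪v,α⟫/⟪α,α⟫) α`. -/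
def IsReflAlong (s : V ≃ₗᵢ[ℝ] V) (α : V) : Prop :=
  α ≠ 0 ∧ ∀ v : V, s v = v - ((2 * ⟪v, α⟫ / ⟪α, α⟫) • α)

/-- `s` is a reflection. -/
def IsReflection (s : V ≃ₗᵢ[ℝ] V) : Prop :=
  ∃ α : V, IsReflAlong s α

/-- A reflection group: a subgroup of the group of linear isometries of `V` generated by
the reflections it contains. -/
def IsReflectionGroup (W : Subgroup (V ≃ₗᵢ[ℝ] V)) : Prop :=
  W = Subgroup.closure {s | IsReflection s ∧ s ∈ W}

/-- `a` is a generic point for `W`: it is fixed by no reflection belonging to `W`. -/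
def IsGeneric (W : Subgroup (V ≃ₗᵢ[ℝ] V)) (a : V) : Prop :=
  ∀ s ∈ W, IsReflection s → s a ≠ a

/-- The `W`-orbit of the point `a`. -/
def orbitSet (W : Subgroup (V ≃ₗᵢ[ℝ] V)) (a : V) : Set V :=
  {x | ∃ w ∈ W, x = w a}

/-- The permutahedron `Perm^a(W)`: the convex hull of the `W`-orbit of `a`. -/
noncomputable def permutahedron (W : Subgroup (V ≃ₗᵢ[ℝ] V)) (a : V) : Set V :=
  convexHull ℝ (orbitSet W a)

/-- A root system for `W`. -/
structure IsRootSystem (W : Subgroup (V ≃ₗᵢ[ℝ] V)) (Φ : Set V) : Prop where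
  finite : Φ.Finite
  nonempty : Φ.Nonempty
  ne_zero : ∀ α ∈ Φ, α ≠ 0
  gen : W = Subgroup.closure {s | ∃ α ∈ Φ, IsReflAlong s α}
  line : ∀ α ∈ Φ, {β ∈ Φ | ∃ t : ℝ, β = t • α} = {α, -α}
  stable : ∀ w ∈ W, (⇑w) '' Φ = Φ

/-- The positive system determined by the generic point `a`: roots `α` with `⟪a, α⟫ > 0`. -/
def posSystem (a : V) (Φ : Set V) : Set V :=
  {α ∈ Φ | 0 < ⟪a, α⟫}

/-- `Δ` is a simple system for the positive system `Φp`: `Δ ⊆ Φp` is linearly independent and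
every element of `Φp` is a linear combination of `Δ` with nonnegative coefficients. -/
def IsSimpleSystem (Φp Δ : Set V) : Prop :=
  Δ ⊆ Φp ∧ LinearIndependent ℝ ((↑) : Δ → V) ∧
    ∀ β ∈ Φp, ∃ c : V →₀ ℝ, (c.support : Set V) ⊆ Δ ∧ (∀ v : V, 0 ≤ c v) ∧
      β = c.sum fun v r => r • v

/-- The subgroup generated by the reflections along the vectors of `I`. -/
def genSubgroup (I : Set V) : Subgroup (V ≃ₗᵢ[ℝ] V) :=
  Subgroup.closure {s | ∃ β ∈ I, IsReflAlong s β}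

/-! ### Reflections -/

/-- The orthogonal reflection along `α`, as a linear isometry; the identity if `α = 0`. -/
noncomputable def rootRefl (α : V) : V ≃ₗᵢ[ℝ] V := (ℝ ∙ α)ᗮ.reflection

lemma rootRefl_apply (α v : V) : rootRefl α v = v - (2 * ⟪v, α⟫ / ⟪α, α⟫) • α := by
  rw [rootRefl, Submodule.reflection_orthogonal_apply, Submodule.reflection_singleton_apply,
    real_inner_self_eq_norm_sq, real_inner_comm]
  simp only [RCLike.ofReal_real_eq_id, id_eq, two_smul, neg_sub, ← add_smul]
  congr 2
  ring

lemma isReflAlong_refl {α : V} (h : α ≠ 0) : IsReflAlong (rootRefl α) α := ⟨h, rootRefl_apply α⟩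

lemma IsReflAlong.eq_refl {s : V ≃ₗᵢ[ℝ] V} {α : V} (h : IsReflAlong s α) : s = rootRefl α := by
  ext v
  rw [h.2, rootRefl_apply]

lemma rootRefl_mul_self (α : V) : rootRefl α * rootRefl α = 1 :=
  Submodule.reflection_mul_reflection _

lemma rootRefl_inv (α : V) : (rootRefl α)⁻¹ = rootRefl α :=
  inv_eq_of_mul_eq_one_left (rootRefl_mul_self α)

lemma rootRefl_refl_apply (α v : V) : rootRefl α (rootRefl α v) = v :=
  Submodule.reflection_reflection _ v

lemma inner_refl_comm (α x y : V) : ⟪rootRefl α x, y⟫ = ⟪x, rootRefl α y⟫ := by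
  rw [← (rootRefl α).inner_map_map, rootRefl_refl_apply]

lemma inner_refl_left (α x y : V) :
    ⟪rootRefl α x, y⟫ = ⟪x, y⟫ - 2 * ⟪x, α⟫ / ⟪α, α⟫ * ⟪α, y⟫ := by
  rw [rootRefl_apply, inner_sub_left, real_inner_smul_left]

/-- If reflecting `x` along `α` does not increase the pairing with `y`, and `⟪α, y⟫ > 0`, then `x`
lies on the nonnegative side of the mirror of `α`. -/
lemma inner_nonneg_of_refl_le {α x y : V} (hy : 0 < ⟪α, y⟫)
    (h : ⟪rootRefl α x, y⟫ ≤ ⟪x, y⟫) : 0 ≤ ⟪x, α⟫ := by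
  by_contra! hlt
  have hα : 0 < ⟪α, α⟫ := by
    rw [real_inner_self_pos]
    rintro rfl
    simp at hy
  rw [inner_refl_left] at h
  have : 2 * ⟪x, α⟫ / ⟪α, α⟫ * ⟪α, y⟫ < 0 :=
    mul_neg_of_neg_of_pos (div_neg_of_neg_of_pos (by linarith) hα) hy
  linarith

lemma rootRefl_map (w : V ≃ₗᵢ[ℝ] V) (α : V) : rootRefl (w α) = w * rootRefl α * w⁻¹ := by
  ext v
  have h : ⟪v, w α⟫ = ⟪w⁻¹ v, α⟫ := by
    rw [← w.inner_map_map (w⁻¹ v) α]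
    congr 1
    exact (w.apply_symm_apply v).symm
  have h' : w (w⁻¹ v) = v := w.apply_symm_apply v
  change rootRefl (w α) v = w (rootRefl α (w⁻¹ v))
  rw [rootRefl_apply, rootRefl_apply, map_sub, map_smul, h', h, w.inner_map_map]

lemma rootRefl_mem_genSubgroup {I : Set V} {α : V} (h : α ∈ I) (h0 : α ≠ 0) :
    rootRefl α ∈ genSubgroup I :=
  Subgroup.subset_closure ⟨α, h, isReflAlong_refl h0⟩

/-! ### Simple systems -/

lemma exists_inner_eq [FiniteDimensional ℝ V] {Δ : Set V}
    (h : LinearIndependent ℝ ((↑) : Δ → V)) (f : V → ℝ) :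
    ∃ v : V, ∀ δ ∈ Δ, ⟪v, δ⟫ = f δ := by
  let b := Module.Basis.extend h
  have hsub : Δ ⊆ LinearIndepOn.extend (v := id) (K := ℝ) h (Set.subset_univ Δ) :=
    LinearIndepOn.subset_extend (v := id) h _
  let L : V →ₗ[ℝ] ℝ := b.constr ℝ fun i => f i
  refine ⟨(InnerProductSpace.toDual ℝ V).symm L.toContinuousLinearMap, fun δ hδ => ?_⟩
  rw [InnerProductSpace.toDual_symm_apply]
  have hb : b ⟨δ, hsub hδ⟩ = δ := Module.Basis.extend_apply_self h _
  have := b.constr_basis ℝ (fun i => f i) ⟨δ, hsub hδ⟩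
  rw [hb] at this
  exact this

lemma inner_nonneg_of_simple {P Δ : Set V} (hΔ : IsSimpleSystem P Δ) {v : V}
    (hv : ∀ δ ∈ Δ, 0 ≤ ⟪v, δ⟫) {β : V} (hβ : β ∈ P) : 0 ≤ ⟪v, β⟫ := by
  obtain ⟨c, hc, h0, rfl⟩ := hΔ.2.2 β hβ
  rw [Finsupp.sum, inner_sum]
  refine Finset.sum_nonneg fun δ hδ => ?_
  rw [real_inner_smul_right]
  exact mul_nonneg (h0 δ) (hv δ (hc hδ))

section RootSystem

variable {W : Subgroup (V ≃ₗᵢ[ℝ] V)} {Φ : Set V} {a : V} {Δ : Set V}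

lemma IsRootSystem.rootRefl_mem (hΦ : IsRootSystem W Φ) {α : V} (h : α ∈ Φ) : rootRefl α ∈ W := by
  rw [hΦ.gen]
  exact Subgroup.subset_closure ⟨α, h, isReflAlong_refl (hΦ.ne_zero α h)⟩

lemma IsRootSystem.map_mem (hΦ : IsRootSystem W Φ) {w : V ≃ₗᵢ[ℝ] V} (hw : w ∈ W) {α : V}
    (h : α ∈ Φ) : w α ∈ Φ := by
  rw [← hΦ.stable w hw]
  exact ⟨α, h, rfl⟩

lemma IsRootSystem.neg_mem (hΦ : IsRootSystem W Φ) {α : V} (h : α ∈ Φ) : -α ∈ Φ := by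
  have : -α ∈ ({α, -α} : Set V) := by simp
  rw [← hΦ.line α h] at this
  exact this.1

lemma IsRootSystem.inner_ne_zero (hΦ : IsRootSystem W Φ) (ha : IsGeneric W a) {α : V}
    (h : α ∈ Φ) : ⟪a, α⟫ ≠ 0 := by
  intro h0
  apply ha _ (hΦ.rootRefl_mem h) ⟨α, isReflAlong_refl (hΦ.ne_zero α h)⟩
  simp [rootRefl_apply, h0]

lemma IsRootSystem.genSubgroup_le (hΦ : IsRootSystem W Φ) {I : Set V} (hI : I ⊆ Φ) :
    genSubgroup I ≤ W := by
  rw [genSubgroup, Subgroup.closure_le]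
  rintro s ⟨β, hβ, hs⟩
  rw [hs.eq_refl]
  exact hΦ.rootRefl_mem (hI hβ)

/-- A simple reflection `s_α` permutes the positive roots other than `α`: some simple root
`δ ≠ α` has a positive coefficient in `β`, and this coefficient is unchanged in `s_α β`. -/
lemma rootRefl_simple_mem_pos [FiniteDimensional ℝ V] (hΦ : IsRootSystem W Φ) (ha : IsGeneric W a)
    (hΔ : IsSimpleSystem (posSystem a Φ) Δ) {α β : V} (hα : α ∈ Δ) (hβ : β ∈ posSystem a Φ)
    (hne : β ≠ α) : rootRefl α β ∈ posSystem a Φ := by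
  classical
  have hαΦ := hΔ.1 hα
  have hmem : rootRefl α β ∈ Φ := hΦ.map_mem (hΦ.rootRefl_mem hαΦ.1) hβ.1
  refine ⟨hmem, ?_⟩
  by_contra hneg
  have hlt : ⟪a, rootRefl α β⟫ < 0 := lt_of_le_of_ne (not_lt.1 hneg) (hΦ.inner_ne_zero ha hmem)
  have hmem' : -rootRefl α β ∈ posSystem a Φ :=
    ⟨hΦ.neg_mem hmem, by rw [inner_neg_right]; linarith⟩
  obtain ⟨c, hc, h0, hsum⟩ := hΔ.2.2 β hβ
  by_cases hex : ∃ δ ∈ c.support, δ ≠ α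
  · obtain ⟨δ, hδ, hδα⟩ := hex
    -- `ω` reads off the coefficient of `δ`
    obtain ⟨ω, hω⟩ := exists_inner_eq hΔ.2.1 (fun x => if x = δ then 1 else 0)
    have h1 : ⟪ω, β⟫ = c δ := by
      rw [hsum, Finsupp.sum, inner_sum, Finset.sum_eq_single δ]
      · rw [real_inner_smul_right, hω δ (hc hδ)]
        simp
      · intro x hx hxδ
        rw [real_inner_smul_right, hω x (hc hx)]
        simp [hxδ]
      · exact fun h => absurd hδ h
    have h2 : ⟪ω, rootRefl α β⟫ = c δ := by
      rw [rootRefl_apply, inner_sub_right, real_inner_smul_right, hω α hα, h1]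
      simp [hδα.symm]
    have h3 : 0 ≤ ⟪ω, -rootRefl α β⟫ := by
      refine inner_nonneg_of_simple hΔ (fun x hx => ?_) hmem'
      rw [hω x hx]
      split_ifs <;> simp
    rw [inner_neg_right, h2] at h3
    have h4 : c δ ≠ 0 := Finsupp.mem_support_iff.1 hδ
    exact h4 (le_antisymm (by linarith) (h0 δ))
  · push Not at hex
    have hβα : β = c α • α := by
      rw [hsum, Finsupp.sum, Finset.sum_eq_single α]
      · exact fun x hx hxα => absurd (hex x hx) hxα
      · intro h
        rw [Finsupp.notMem_support_iff.1 h, zero_smul]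
    have : β ∈ ({α, -α} : Set V) := by
      rw [← hΦ.line α hαΦ.1]
      exact ⟨hβ.1, _, hβα⟩
    rcases this with h | h
    · exact hne h
    · have h1 := hβ.2
      have h2 := hαΦ.2
      rw [h, inner_neg_right] at h1
      linarith

/-- Every positive root is carried to a simple root by the group generated by the simple
reflections: as long as a positive root `γ` is not simple, some simple reflection lowers its
height `⟪a, γ⟫`. -/
lemma exists_map_mem_simple [FiniteDimensional ℝ V] (hΦ : IsRootSystem W Φ)
    (ha : IsGeneric W a) (hΔ : IsSimpleSystem (posSystem a Φ) Δ) {β : V}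
    (hβ : β ∈ posSystem a Φ) : ∃ u ∈ genSubgroup Δ, u β ∈ Δ := by
  let S : Set V := {γ | γ ∈ posSystem a Φ ∧ ∃ u ∈ genSubgroup Δ, γ = u β}
  have hS : S.Finite := hΦ.finite.subset fun γ h => h.1.1
  obtain ⟨γ, ⟨hγ, u, hu, hγu⟩, hmin⟩ :=
    Set.exists_min_image S (fun γ => ⟪a, γ⟫) hS ⟨β, hβ, 1, one_mem _, rfl⟩
  refine ⟨u, hu, ?_⟩
  rw [← hγu]
  by_contra hnot
  have hle : ∀ δ ∈ Δ, 0 ≤ ⟪-γ, δ⟫ := by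
    intro δ hδ
    have hne : γ ≠ δ := fun h => hnot (h ▸ hδ)
    have hδ' := hΔ.1 hδ
    have h1 := hmin (rootRefl δ γ) ⟨rootRefl_simple_mem_pos hΦ ha hΔ hδ hγ hne, rootRefl δ * u,
      mul_mem (rootRefl_mem_genSubgroup hδ (hΦ.ne_zero δ hδ'.1)) hu, by rw [hγu]; rfl⟩
    refine inner_nonneg_of_refl_le (y := a) (by rw [real_inner_comm]; exact hδ'.2) ?_
    rw [map_neg, inner_neg_left, inner_neg_left, real_inner_comm, real_inner_comm a γ]
    simpa using h1
  have h1 := inner_nonneg_of_simple hΔ hle hγ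
  have h2 : 0 < ⟪γ, γ⟫ := real_inner_self_pos.2 (hΦ.ne_zero γ hγ.1)
  rw [inner_neg_left] at h1
  linarith

/-- The simple reflections generate `W`. -/
lemma le_genSubgroup [FiniteDimensional ℝ V] (hΦ : IsRootSystem W Φ)
    (ha : IsGeneric W a) (hΔ : IsSimpleSystem (posSystem a Φ) Δ) : W ≤ genSubgroup Δ := by
  have key : ∀ β ∈ posSystem a Φ, rootRefl β ∈ genSubgroup Δ := by
    intro β hβ
    obtain ⟨u, hu, hmem⟩ := exists_map_mem_simple hΦ ha hΔ hβ
    have h := rootRefl_mem_genSubgroup hmem (hΦ.ne_zero _ (hΔ.1 hmem).1)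
    rw [rootRefl_map] at h
    have h2 := mul_mem (mul_mem (inv_mem hu) h) hu
    convert h2 using 1
    group
  rw [hΦ.gen, Subgroup.closure_le]
  rintro s ⟨β, hβ, hs⟩
  rw [hs.eq_refl]
  rcases lt_or_gt_of_ne (hΦ.inner_ne_zero ha hβ) with h | h
  · have h1 := key (-β) ⟨hΦ.neg_mem hβ, by rw [inner_neg_right]; linarith⟩
    have h2 : rootRefl β = rootRefl (-β) := by
      ext v
      simp [rootRefl_apply, neg_div]
    rwa [SetLike.mem_coe, h2]
  · exact key β ⟨hβ, h⟩

/-! ### Words in the simple reflections and the exchange condition -/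

/-- `IsWord Δ n g`: `g` is a product of `n` reflections along vectors of `Δ`. -/
inductive IsWord (Δ : Set V) : ℕ → (V ≃ₗᵢ[ℝ] V) → Prop
  | one : IsWord Δ 0 1
  | mul {n : ℕ} {g : V ≃ₗᵢ[ℝ] V} {α : V} (hα : α ∈ Δ) (hg : IsWord Δ n g) :
      IsWord Δ (n + 1) (rootRefl α * g)

lemma exists_isWord {g : V ≃ₗᵢ[ℝ] V} (hg : g ∈ genSubgroup Δ) : ∃ n, IsWord Δ n g := by
  induction hg using Subgroup.closure_induction_left with
  | one => exact ⟨0, .one⟩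
  | mul_left s hs g _ ih =>
    obtain ⟨β, hβ, hs⟩ := hs
    obtain ⟨n, hn⟩ := ih
    rw [hs.eq_refl]
    exact ⟨n + 1, .mul hβ hn⟩
  | inv_mul_cancel s hs g _ ih =>
    obtain ⟨β, hβ, hs⟩ := hs
    obtain ⟨n, hn⟩ := ih
    rw [hs.eq_refl, rootRefl_inv]
    exact ⟨n + 1, .mul hβ hn⟩

/-- The exchange condition: if `β` is a positive root and `g⁻¹ β` is negative, i.e.
`⟪g a, β⟫ < 0`, then `s_β g` is given by a shorter word than `g`. -/
lemma IsWord.exchange [FiniteDimensional ℝ V] (hΦ : IsRootSystem W Φ)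
    (ha : IsGeneric W a) (hΔ : IsSimpleSystem (posSystem a Φ) Δ) {n : ℕ} {g : V ≃ₗᵢ[ℝ] V}
    (hg : IsWord Δ n g) :
    ∀ β ∈ posSystem a Φ, ⟪g a, β⟫ < 0 → ∃ m < n, IsWord Δ m (rootRefl β * g) := by
  induction hg with
  | one => exact fun β hβ h => absurd hβ.2 (not_lt.2 h.le)
  | @mul n h γ hγ hh ih =>
    intro β hβ hneg
    by_cases hβγ : β = γ
    · subst hβγ
      refine ⟨n, n.lt_succ_self, ?_⟩
      rwa [← mul_assoc, rootRefl_mul_self, one_mul]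
    · have hpos := rootRefl_simple_mem_pos hΦ ha hΔ hγ hβ hβγ
      have hneg' : ⟪h a, rootRefl γ β⟫ < 0 := by
        rw [← inner_refl_comm]
        exact hneg
      obtain ⟨m, hm, hword⟩ := ih _ hpos hneg'
      refine ⟨m + 1, by omega, ?_⟩
      have := IsWord.mul hγ hword
      rw [rootRefl_map, rootRefl_inv] at this
      simp only [mul_assoc] at this
      rwa [← mul_assoc, rootRefl_mul_self, one_mul] at this

/-- A word mapping `a` to a dominant point is trivial: by exchange, its first letter could
otherwise be absorbed, giving a shorter word. -/
lemma IsWord.eq_one [FiniteDimensional ℝ V] (hΦ : IsRootSystem W Φ)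
    (ha : IsGeneric W a) (hΔ : IsSimpleSystem (posSystem a Φ) Δ) (n : ℕ) :
    ∀ g : V ≃ₗᵢ[ℝ] V, IsWord Δ n g → (∀ δ ∈ Δ, 0 < ⟪g a, δ⟫) → g = 1 := by
  induction n using Nat.strong_induction_on with
  | _ n ih =>
    intro g hg hdom
    cases hg with
    | one => rfl
    | @mul n h γ hγ hh =>
      have hneg : ⟪h a, γ⟫ < 0 := by
        have h1 : 0 < ⟪rootRefl γ (h a), γ⟫ := hdom γ hγ
        have h2 : 0 < ⟪γ, γ⟫ := real_inner_self_pos.2 (hΦ.ne_zero γ (hΔ.1 hγ).1)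
        rw [inner_refl_left, div_mul_cancel₀ _ h2.ne'] at h1
        linarith
      obtain ⟨m, hm, hword⟩ := hh.exchange hΦ ha hΔ γ (hΔ.1 hγ) hneg
      exact ih m (by omega) _ hword hdom

/-- `W` acts freely on chambers: only the identity maps `a` to a dominant point. -/
lemma eq_one_of_dominant [FiniteDimensional ℝ V] (hΦ : IsRootSystem W Φ)
    (ha : IsGeneric W a) (hΔ : IsSimpleSystem (posSystem a Φ) Δ) {g : V ≃ₗᵢ[ℝ] V}
    (hg : g ∈ W) (hdom : ∀ δ ∈ Δ, 0 ≤ ⟪g a, δ⟫) : g = 1 := by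
  obtain ⟨n, hn⟩ := exists_isWord (le_genSubgroup hΦ ha hΔ hg)
  refine IsWord.eq_one hΦ ha hΔ n g hn fun δ hδ => lt_of_le_of_ne (hdom δ hδ) ?_
  have h1 : ⟪g a, δ⟫ = ⟪a, g⁻¹ δ⟫ := by
    rw [← g.inner_map_map a]
    congr 1
    exact (g.apply_symm_apply δ).symm
  rw [h1]
  exact (hΦ.inner_ne_zero ha (hΦ.map_mem (inv_mem hg) (hΔ.1 hδ).1)).symm

/-! ### Maximizers on the orbit -/

lemma inner_genSubgroup_apply {I : Set V} {l : V} (hl : ∀ δ ∈ I, ⟪l, δ⟫ = 0)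
    {u : V ≃ₗᵢ[ℝ] V} (hu : u ∈ genSubgroup I) : ∀ x, ⟪l, u x⟫ = ⟪l, x⟫ := by
  induction hu using Subgroup.closure_induction with
  | mem s hs =>
    obtain ⟨β, hβ, hs⟩ := hs
    intro x
    rw [hs.2, inner_sub_right, real_inner_smul_right, hl β hβ, mul_zero, sub_zero]
  | one => exact fun x => rfl
  | mul u v _ _ hu hv => exact fun x => (hu (v x)).trans (hv x)
  | inv u _ hu =>
    intro x
    rw [← hu]
    congr 1
    exact u.apply_symm_apply x

/-- If `l` vanishes on `I` and is positive on the other simple roots, and `g a` maximizes `⟪l, ·⟫`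
on the orbit of `a`, then `g ∈ W_I`: the element `u ∈ W_I` maximizing `⟪u g a, a⟫` makes `u g a`
dominant, which forces `u g = 1`. -/
lemma mem_genSubgroup_of_maximizer [FiniteDimensional ℝ V]
    (hWfin : (W : Set (V ≃ₗᵢ[ℝ] V)).Finite) (hΦ : IsRootSystem W Φ)
    (ha : IsGeneric W a) (hΔ : IsSimpleSystem (posSystem a Φ) Δ) {I : Set V} (hI : I ⊆ Δ)
    {l : V} (hl : ∀ δ ∈ I, ⟪l, δ⟫ = 0) (hl' : ∀ δ ∈ Δ, δ ∉ I → 0 < ⟪l, δ⟫)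
    {g : V ≃ₗᵢ[ℝ] V} (hg : g ∈ W) (hmax : ∀ h ∈ W, ⟪l, h a⟫ ≤ ⟪l, g a⟫) :
    g ∈ genSubgroup I := by
  have hIW : genSubgroup I ≤ W := hΦ.genSubgroup_le fun δ hδ => (hΔ.1 (hI hδ)).1
  obtain ⟨u, hu, humax⟩ := Set.exists_max_image (genSubgroup I : Set (V ≃ₗᵢ[ℝ] V))
    (fun u => ⟪u (g a), a⟫) (hWfin.subset hIW) ⟨1, one_mem _⟩
  have hug : u * g ∈ W := mul_mem (hIW hu) hg
  have h1 : u * g = 1 := by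
    refine eq_one_of_dominant hΦ ha hΔ hug fun δ hδ => ?_
    have hδ' := hΔ.1 hδ
    by_cases hδI : δ ∈ I
    · refine inner_nonneg_of_refl_le (y := a) (by rw [real_inner_comm]; exact hδ'.2) ?_
      exact humax (rootRefl δ * u)
        (mul_mem (rootRefl_mem_genSubgroup hδI (hΦ.ne_zero δ hδ'.1)) hu)
    · refine inner_nonneg_of_refl_le (y := l)
        (by rw [real_inner_comm]; exact hl' δ hδ hδI) ?_
      rw [real_inner_comm, real_inner_comm l ((u * g) a)]
      calc ⟪l, (rootRefl δ * (u * g)) a⟫ ≤ ⟪l, g a⟫ := hmax _ (mul_mem (hΦ.rootRefl_mem hδ'.1) hug)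
        _ = ⟪l, (u * g) a⟫ := (inner_genSubgroup_apply hl hu _).symm
  rw [eq_inv_of_mul_eq_one_right h1]
  exact inv_mem hu

end RootSystem

/-! ### Exposed faces of convex hulls -/

/-- If the linear functional `l` is bounded by `M` on `O` and attains `M` there, the face of
`conv O` where `l` is maximal is the convex hull of the points of `O` on the level `M`. -/
lemma convexHull_level_eq {O : Set V} (l : StrongDual ℝ V) {M : ℝ} (hle : ∀ x ∈ O, l x ≤ M)
    (hex : ∃ x ∈ O, l x = M) :
    convexHull ℝ {x ∈ O | l x = M} =
      {x ∈ convexHull ℝ O | ∀ y ∈ convexHull ℝ O, l y ≤ l x} := by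
  set F := convexHull ℝ {x ∈ O | l x = M} with hF
  -- convex, because a proper convex combination reaches level `M` only if both ends do
  have hconv : Convex ℝ {x : V | l x ≤ M ∧ (l x = M → x ∈ F)} := by
    intro x hx y hy s t hs ht hst
    have hval : l (s • x + t • y) = s * l x + t * l y := by simp
    have h1 : s * l x ≤ s * M := mul_le_mul_of_nonneg_left hx.1 hs
    have h2 : t * l y ≤ t * M := mul_le_mul_of_nonneg_left hy.1 ht
    have h3 : s * M + t * M = M := by rw [← add_mul, hst, one_mul]
    refine ⟨by rw [hval]; linarith, fun hM => ?_⟩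
    rw [hval] at hM
    rcases hs.eq_or_lt with rfl | hs'
    · have ht1 : t = 1 := by linarith
      subst ht1
      have := hy.2 (by linarith)
      simpa using this
    rcases ht.eq_or_lt with rfl | ht'
    · have hs1 : s = 1 := by linarith
      subst hs1
      have := hx.2 (by linarith)
      simpa using this
    have hxM : l x = M := mul_left_cancel₀ hs'.ne' (by linarith)
    have hyM : l y = M := mul_left_cancel₀ ht'.ne' (by linarith)
    exact convex_convexHull ℝ _ (hx.2 hxM) (hy.2 hyM) hs ht hst
  have hsub : convexHull ℝ O ⊆ {x : V | l x ≤ M ∧ (l x = M → x ∈ F)} :=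
    convexHull_min (fun x hx => ⟨hle x hx, fun h => subset_convexHull ℝ _ ⟨hx, h⟩⟩) hconv
  ext x
  constructor
  · intro hx
    have hxO : x ∈ convexHull ℝ O := convexHull_mono (Set.sep_subset _ _) hx
    have hxM : l x = M := by
      have : F ⊆ {x | l x = M} :=
        convexHull_min (fun x hx => hx.2) (convex_hyperplane l.toLinearMap.isLinear M)
      exact this hx
    exact ⟨hxO, fun y hy => hxM ▸ (hsub hy).1⟩
  · rintro ⟨hx, hmax⟩
    obtain ⟨z, hz, hzM⟩ := hex
    have := hmax z (subset_convexHull ℝ _ hz)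
    exact (hsub hx).2 (le_antisymm (hsub hx).1 (hzM ▸ this))

/-- every translate `w(F_I)` (`w ∈ W`, `I ⊆ Δ`) is an exposed face of the
permutahedron. -/
theorem face_translate_isExposed [FiniteDimensional ℝ V]
    (W : Subgroup (V ≃ₗᵢ[ℝ] V)) (hWfin : (W : Set (V ≃ₗᵢ[ℝ] V)).Finite)
    (Φ : Set V) (hΦ : IsRootSystem W Φ) (a : V) (ha : IsGeneric W a)
    (Δ : Set V) (hΔ : IsSimpleSystem (posSystem a Φ) Δ) :
    ∀ w ∈ W, ∀ I ⊆ Δ,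
      IsExposed ℝ (permutahedron W a) ((⇑w) '' permutahedron (genSubgroup I) a) := by
  classical
  intro w hw I hI _
  obtain ⟨l, hl⟩ := exists_inner_eq hΔ.2.1 (fun δ => if δ ∈ I then 0 else 1)
  have hl0 : ∀ δ ∈ I, ⟪l, δ⟫ = 0 := fun δ hδ => by simp [hl δ (hI hδ), hδ]
  have hl1 : ∀ δ ∈ Δ, δ ∉ I → 0 < ⟪l, δ⟫ := fun δ hδ hδI => by simp [hl δ hδ, hδI]
  have hIW : genSubgroup I ≤ W := hΦ.genSubgroup_le fun δ hδ => (hΔ.1 (hI hδ)).1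
  have hmax : ∀ h ∈ W, ⟪l, h a⟫ ≤ ⟪l, a⟫ := by
    obtain ⟨g, hg, hgmax⟩ := Set.exists_max_image (W : Set (V ≃ₗᵢ[ℝ] V))
      (fun h => ⟪l, h a⟫) hWfin ⟨1, one_mem _⟩
    have hgI := mem_genSubgroup_of_maximizer hWfin hΦ ha hΔ hI hl0 hl1 hg hgmax
    intro h hh
    rw [← inner_genSubgroup_apply hl0 hgI a]
    exact hgmax h hh
  have hw_inner : ∀ g : V ≃ₗᵢ[ℝ] V, ⟪w l, g a⟫ = ⟪l, (w⁻¹ * g) a⟫ := by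
    intro g
    rw [← w.inner_map_map l]
    congr 1
    exact (w.apply_symm_apply (g a)).symm
  refine ⟨innerSL ℝ (w l), ?_⟩
  have himage : (⇑w) '' orbitSet (genSubgroup I) a =
      {x ∈ orbitSet W a | innerSL ℝ (w l) x = ⟪l, a⟫} := by
    ext x
    constructor
    · rintro ⟨_, ⟨u, hu, rfl⟩, rfl⟩
      refine ⟨⟨w * u, mul_mem hw (hIW hu), rfl⟩, ?_⟩
      rw [innerSL_apply_apply, w.inner_map_map, inner_genSubgroup_apply hl0 hu]
    · rintro ⟨⟨g, hg, rfl⟩, hx⟩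
      rw [innerSL_apply_apply, hw_inner] at hx
      have hmem := mem_genSubgroup_of_maximizer hWfin hΦ ha hΔ hI hl0 hl1
        (mul_mem (inv_mem hw) hg) (fun h hh => (hmax h hh).trans hx.ge)
      exact ⟨_, ⟨_, hmem, rfl⟩, w.apply_symm_apply (g a)⟩
  have hhull : (⇑w) '' permutahedron (genSubgroup I) a =
      convexHull ℝ ((⇑w) '' orbitSet (genSubgroup I) a) :=
    w.toLinearEquiv.toLinearMap.image_convexHull _
  rw [hhull, himage]
  refine convexHull_level_eq _ ?_ ⟨w a, ⟨w, hw, rfl⟩, ?_⟩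
  · rintro _ ⟨g, hg, rfl⟩
    rw [innerSL_apply_apply, hw_inner]
    exact hmax _ (mul_mem (inv_mem hw) hg)
  · rw [innerSL_apply_apply, w.inner_map_map]
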